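/- For every integer k ≥ 0, the dimension of the space Ĥₖ of homogeneous degree-k polynomial solutions of the Navier equations equals n times the dimension of the space Hₖ of harmonic homogeneous polynomials of degree k: dim Ĥₖ = n · dim Hₖ. -/

import Mathlib

open MvPolynomial

/-- The Laplacian `Δ = ∑ᵣ ∂²_{xᵣ}` as an ℝ-linear map on `ℝ[x₁,…,xₙ]`. -/
noncomputable def lapL (n : ℕ) : MvPolynomial (Fin n) ℝ →ₗ[ℝ] MvPolynomial (Fin n) ℝ :=
  ∑ r : Fin n, ((pderiv r).toLinearMap.comp (pderiv r).toLinearMap)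

/-- The Navier operator `N(u)ⱼ = Δuⱼ + b·∂_{xⱼ}(∑ᵣ ∂_{xᵣ} uᵣ)` as an ℝ-linear map on
`n`-tuples of polynomials. -/
noncomputable def navierL (n : ℕ) (b : ℝ) :
    (Fin n → MvPolynomial (Fin n) ℝ) →ₗ[ℝ] (Fin n → MvPolynomial (Fin n) ℝ) :=
  LinearMap.pi fun j =>
    (lapL n).comp (LinearMap.proj j) +
      b • ((pderiv j).toLinearMap.comp
        (∑ r : Fin n, ((pderiv r).toLinearMap.comp
          (LinearMap.proj (R := ℝ) (φ := fun _ : Fin n => MvPolynomial (Fin n) ℝ) r))))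

/-- `Ĥₖ` : the subspace of `n`-tuples of homogeneous degree-`k` polynomials solving the
Navier equations. -/
noncomputable def HhatSub (n : ℕ) (b : ℝ) (k : ℕ) :
    Submodule ℝ (Fin n → MvPolynomial (Fin n) ℝ) :=
  (Submodule.pi Set.univ fun _ : Fin n => homogeneousSubmodule (Fin n) ℝ k) ⊓
    LinearMap.ker (navierL n b)

/-- `Hₖ` : harmonic homogeneous polynomials of degree `k`. -/
noncomputable def harmSub (n : ℕ) (k : ℕ) : Submodule ℝ (MvPolynomial (Fin n) ℝ) :=
  homogeneousSubmodule (Fin n) ℝ k ⊓ LinearMap.ker (lapL n)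

/-!
Let `G` be a linear right inverse of the Laplacian that raises degrees by two, and put
`P = ∇ G div`. Since `div ∇ = Δ` and `Δ G = 1`, the operator `P` is idempotent; since `Δ` commutes
with partial derivatives, `Δ P = ∇ div`. Hence the Navier operator is `Δ (1 + b P)`, where
`1 + b P` is invertible for `b ≠ -1` and respects homogeneity, so it identifies the solutions of
the Navier equations with the tuples of harmonic polynomials.
-/

section Operators

variable {σ R : Type*} [CommSemiring R]

theorem pderiv_pderiv_comm (i j : σ) (p : MvPolynomial σ R) :
    pderiv i (pderiv j p) = pderiv j (pderiv i p) := by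
  rcases eq_or_ne i j with rfl | hij
  · rfl
  · ext m
    simp [coeff_pderiv, add_right_comm, mul_right_comm, hij, hij.symm]

theorem pderiv_eq_zero_of_isHomogeneous_zero {p : MvPolynomial σ R} (hp : p.IsHomogeneous 0)
    (i : σ) : pderiv i p = 0 := by
  rw [totalDegree_eq_zero_iff_eq_C.mp ((totalDegree_zero_iff_isHomogeneous _).mpr hp), pderiv_C]

theorem pderiv_X_pow_mul {i : σ} {p : MvPolynomial σ R} (hp : pderiv i p = 0) (m : ℕ) :
    pderiv i (X i ^ (m + 1) * p) = (m + 1 : R) • (X i ^ m * p) := by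
  rw [pderiv_mul, hp, mul_zero, add_zero, pderiv_pow, pderiv_X_self, mul_one, smul_eq_C_mul]
  simp [mul_assoc]

variable [Fintype σ]

variable (σ R) in
/-- The Laplacian `∑ᵣ ∂²_{xᵣ}` on polynomials in finitely many variables;
`lapL n` is the real case. -/
noncomputable def polyLaplacian : MvPolynomial σ R →ₗ[R] MvPolynomial σ R :=
  ∑ r, (pderiv r).toLinearMap ∘ₗ (pderiv r).toLinearMap

variable (σ R) in
/-- The gradient of a polynomial, as a tuple of polynomials. -/
noncomputable def polyGradient : MvPolynomial σ R →ₗ[R] (σ → MvPolynomial σ R) :=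
  LinearMap.pi fun j => (pderiv j).toLinearMap

variable (σ R) in
/-- The divergence of a tuple of polynomials. -/
noncomputable def polyDivergence : (σ → MvPolynomial σ R) →ₗ[R] MvPolynomial σ R :=
  ∑ r, (pderiv r).toLinearMap ∘ₗ LinearMap.proj r

variable (σ) in
/-- The Navier operator `Δ + b ∇ div`, where `Δ` acts on each component;
`navierL n b` is the real case. -/
noncomputable def navier (b : R) : (σ → MvPolynomial σ R) →ₗ[R] (σ → MvPolynomial σ R) :=
  (polyLaplacian σ R).compLeft σ + b • (polyGradient σ R ∘ₗ polyDivergence σ R)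

variable (σ R) in
/-- The harmonic homogeneous polynomials of degree `k`. -/
noncomputable def harmonicSubmodule (k : ℕ) : Submodule R (MvPolynomial σ R) :=
  homogeneousSubmodule σ R k ⊓ LinearMap.ker (polyLaplacian σ R)

variable (σ) in
/-- The tuples of homogeneous polynomials of degree `k` that solve the Navier equations. -/
noncomputable def navierSubmodule (b : R) (k : ℕ) : Submodule R (σ → MvPolynomial σ R) :=
  (Submodule.pi Set.univ fun _ => homogeneousSubmodule σ R k) ⊓ LinearMap.ker (navier σ b)

theorem polyLaplacian_apply (p : MvPolynomial σ R) :
    polyLaplacian σ R p = ∑ r, pderiv r (pderiv r p) := by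
  simp [polyLaplacian]

theorem polyDivergence_apply (u : σ → MvPolynomial σ R) :
    polyDivergence σ R u = ∑ r, pderiv r (u r) := by
  simp [polyDivergence]

theorem polyDivergence_polyGradient (p : MvPolynomial σ R) :
    polyDivergence σ R (polyGradient σ R p) = polyLaplacian σ R p := by
  rw [polyDivergence_apply, polyLaplacian_apply]
  rfl

theorem polyLaplacian_pderiv (j : σ) (p : MvPolynomial σ R) :
    polyLaplacian σ R (pderiv j p) = pderiv j (polyLaplacian σ R p) := by
  simp only [polyLaplacian_apply, map_sum, pderiv_pderiv_comm _ j]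

theorem isHomogeneous_polyDivergence {k : ℕ} {u : σ → MvPolynomial σ R}
    (hu : ∀ j, (u j).IsHomogeneous k) : (polyDivergence σ R u).IsHomogeneous (k - 1) := by
  rw [polyDivergence_apply]
  exact IsHomogeneous.sum _ _ _ fun r _ => (hu r).pderiv

theorem isHomogeneous_polyLaplacian {k : ℕ} {p : MvPolynomial σ R} (hp : p.IsHomogeneous k) :
    (polyLaplacian σ R p).IsHomogeneous (k - 2) := by
  rw [polyLaplacian_apply]
  exact IsHomogeneous.sum _ _ _ fun r _ => hp.pderiv.pderiv

theorem polyLaplacian_eq_zero_of_isHomogeneous {k : ℕ} {p : MvPolynomial σ R}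
    (hp : p.IsHomogeneous k) (hk : k < 2) : polyLaplacian σ R p = 0 := by
  rw [polyLaplacian_apply]
  refine Finset.sum_eq_zero fun r _ => pderiv_eq_zero_of_isHomogeneous_zero ?_ r
  simpa [show k - 1 = 0 by omega] using hp.pderiv (i := r)

theorem polyLaplacian_X_pow_mul {i : σ} {p : MvPolynomial σ R} (hp : pderiv i p = 0) (m : ℕ) :
    polyLaplacian σ R (X i ^ (m + 2) * p) =
      ((m + 2 : R) * (m + 1)) • (X i ^ m * p) + X i ^ (m + 2) * polyLaplacian σ R p := by
  classical
  have second_pderiv (r : σ) : pderiv r (pderiv r (X i ^ (m + 2) * p)) =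
      (if r = i then ((m + 2 : R) * (m + 1)) • (X i ^ m * p) else 0) +
        X i ^ (m + 2) * pderiv r (pderiv r p) := by
    split_ifs with hr
    · subst hr
      rw [pderiv_X_pow_mul hp, Derivation.map_smul, pderiv_X_pow_mul hp, smul_smul, hp, map_zero,
        mul_zero, add_zero]
      push_cast
      rw [add_assoc (m : R), one_add_one_eq_two]
    · simp [pderiv_X_of_ne (Ne.symm hr)]
  simp only [polyLaplacian_apply, second_pderiv, Finset.sum_add_distrib, Finset.sum_ite_eq',
    Finset.mem_univ, if_true, Finset.mul_sum]

end Operators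

section RightInverse

variable {σ K : Type*} [Fintype σ] [Field K] [CharZero K]

-- `Δ (xᵢ ^ (m + 2) p)` is a nonzero multiple of `xᵢ ^ m p` plus `xᵢ ^ (m + 2) Δ p`, and `Δ p` has
-- smaller degree than `p`.
theorem X_pow_mul_mem_map_polyLaplacian {i : σ} {d : ℕ} {p : MvPolynomial σ K}
    (hp : p.IsHomogeneous d) (hi : pderiv i p = 0) (m : ℕ) :
    X i ^ m * p ∈ (homogeneousSubmodule σ K (m + d + 2)).map (polyLaplacian σ K) := by
  induction d using Nat.strong_induction_on generalizing p m with
  | _ d ih =>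
    have hom : (X i ^ (m + 2) * p).IsHomogeneous (m + d + 2) := by
      convert (isHomogeneous_X_pow i (m + 2)).mul hp using 1
      ring
    have lower_term : X i ^ (m + 2) * polyLaplacian σ K p ∈
        (homogeneousSubmodule σ K (m + d + 2)).map (polyLaplacian σ K) := by
      rcases lt_or_ge d 2 with hd | hd
      · rw [polyLaplacian_eq_zero_of_isHomogeneous hp hd, mul_zero]
        exact zero_mem _
      · have pderiv_laplacian : pderiv i (polyLaplacian σ K p) = 0 := by
          rw [← polyLaplacian_pderiv, hi, map_zero]
        have degree_eq : m + d + 2 = (m + 2) + (d - 2) + 2 := by omega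
        rw [degree_eq]
        exact ih (d - 2) (by omega) (isHomogeneous_polyLaplacian hp) pderiv_laplacian (m + 2)
    have coeff_ne_zero : (m + 2 : K) * (m + 1) ≠ 0 := by
      exact_mod_cast (by positivity : (m + 2) * (m + 1) ≠ 0)
    rw [← Submodule.smul_mem_iff _ coeff_ne_zero, ← add_sub_cancel_right (_ • _),
      ← polyLaplacian_X_pow_mul hi]
    exact sub_mem (Submodule.mem_map_of_mem hom) lower_term

theorem monomial_mem_map_polyLaplacian [Nonempty σ] (s : σ →₀ ℕ) :
    monomial s (1 : K) ∈ (homogeneousSubmodule σ K (s.degree + 2)).map (polyLaplacian σ K) := by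
  obtain ⟨i⟩ := ‹Nonempty σ›
  have split : s = Finsupp.single i (s i) + s.erase i := (Finsupp.single_add_erase i s).symm
  have degree_eq : s.degree = s i + (s.erase i).degree := by
    conv_lhs => rw [split, map_add, Finsupp.degree_single]
  have factor : monomial s (1 : K) = X i ^ s i * monomial (s.erase i) 1 := by
    conv_lhs => rw [split]
    rw [X_pow_eq_monomial, monomial_mul, one_mul]
  rw [factor, degree_eq]
  exact X_pow_mul_mem_map_polyLaplacian (isHomogeneous_monomial 1 rfl) (by simp [pderiv_monomial]) _

variable (σ K) in
theorem exists_polyLaplacian_rightInverse [Nonempty σ] :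
    ∃ G : MvPolynomial σ K →ₗ[K] MvPolynomial σ K,
      Function.RightInverse G (polyLaplacian σ K) ∧
        ∀ m p, p.IsHomogeneous m → (G p).IsHomogeneous (m + 2) := by
  choose g g_hom laplacian_g using monomial_mem_map_polyLaplacian (σ := σ) (K := K)
  let G := (basisMonomials σ K).constr K g
  have G_monomial (s : σ →₀ ℕ) : G (monomial s 1) = g s := (basisMonomials σ K).constr_basis K g s
  refine ⟨G, LinearMap.congr_fun (f := polyLaplacian σ K ∘ₗ G) (g := LinearMap.id) ?_, ?_⟩
  · refine (basisMonomials σ K).ext fun s => ?_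
    simp only [coe_basisMonomials, LinearMap.comp_apply, G_monomial, laplacian_g,
      LinearMap.id_apply]
  · intro m p hp
    rw [p.as_sum, map_sum]
    refine IsHomogeneous.sum _ _ _ fun s hs => ?_
    have degree_s : s.degree = m := (hp.degree_eq_sum_deg_support hs).symm
    rw [← mul_one (coeff s p), ← smul_eq_mul, ← smul_monomial, map_smul, G_monomial]
    exact Submodule.smul_mem _ _ (degree_s ▸ g_hom s)

end RightInverse

section Idempotent

variable {K : Type*} [Field K] {b : K}

theorem isUnit_one_add_smul_of_isIdempotentElem {A : Type*} [Ring A] [Algebra K A] {e : A}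
    (he : IsIdempotentElem e) (hb : 1 + b ≠ 0) : IsUnit (1 + b • e) := by
  have product (c d : K) : (1 + c • e) * (1 + d • e) = 1 + (c + d + c * d) • e := by
    simp only [mul_add, add_mul, one_mul, mul_one, smul_mul_smul_comm, he.eq]
    module
  obtain ⟨c, hc⟩ : ∃ c, b + c + b * c = 0 := ⟨-b / (1 + b), by field_simp; ring⟩
  refine isUnit_iff_exists.mpr ⟨1 + c • e, ?_, ?_⟩
  · rw [product, hc, zero_smul, add_zero]
  · rw [product, add_comm c, mul_comm c, hc, zero_smul, add_zero]

theorem comap_one_add_smul_of_isIdempotentElem {V : Type*} [AddCommGroup V] [Module K V]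
    {P : Module.End K V} (hP : IsIdempotentElem P) (hb : 1 + b ≠ 0) {W : Submodule K V}
    (hW : W ∈ P.invtSubmodule) : W.comap (1 + b • P) = W := by
  refine le_antisymm (fun v hv => ?_) fun v hv => add_mem hv (W.smul_mem b (hW hv))
  have apply_P : P ((1 + b • P) v) = (1 + b) • P v := by
    have : P (P v) = P v := LinearMap.congr_fun hP v
    simp [this, add_smul]
  have hPv : P v ∈ W := (W.smul_mem_iff hb).mp (apply_P ▸ hW hv)
  simpa using W.sub_mem hv (W.smul_mem b hPv)

end Idempotent

section GradientProjection

variable {σ R : Type*} [Fintype σ] [CommSemiring R] {G : MvPolynomial σ R →ₗ[R] MvPolynomial σ R}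

/-- The operator `∇ G div`. When `G` is a right inverse of the Laplacian, it is a projection onto
gradient fields with the same divergence, as in the Helmholtz decomposition. -/
noncomputable def gradientProjection (G : MvPolynomial σ R →ₗ[R] MvPolynomial σ R) :
    Module.End R (σ → MvPolynomial σ R) :=
  polyGradient σ R ∘ₗ G ∘ₗ polyDivergence σ R

theorem isIdempotentElem_gradientProjection (hG : Function.RightInverse G (polyLaplacian σ R)) :
    IsIdempotentElem (gradientProjection G) := by
  refine LinearMap.ext fun u => ?_
  simp only [gradientProjection, Module.End.mul_apply, LinearMap.comp_apply,
    polyDivergence_polyGradient, hG _]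

theorem navier_eq_polyLaplacian_comp (hG : Function.RightInverse G (polyLaplacian σ R)) (b : R) :
    navier σ b = (polyLaplacian σ R).compLeft σ ∘ₗ (1 + b • gradientProjection G) := by
  have laplacian_projection : (polyLaplacian σ R).compLeft σ ∘ₗ gradientProjection G =
      polyGradient σ R ∘ₗ polyDivergence σ R :=
    LinearMap.ext fun u => funext fun j =>
      (polyLaplacian_pderiv j _).trans (congrArg (pderiv j) (hG (polyDivergence σ R u)))
  rw [LinearMap.comp_add, LinearMap.comp_smul, laplacian_projection]
  rfl

theorem homogeneous_mem_invtSubmodule_gradientProjection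
    (hG : ∀ m p, p.IsHomogeneous m → (G p).IsHomogeneous (m + 2)) (k : ℕ) :
    (Submodule.pi Set.univ fun _ => homogeneousSubmodule σ R k) ∈
      (gradientProjection G).invtSubmodule := by
  intro u hu j _
  replace hu (r : σ) : (u r).IsHomogeneous k := hu r trivial
  rcases k with _ | k
  · have div_eq_zero : polyDivergence σ R u = 0 := by
      rw [polyDivergence_apply]
      exact Finset.sum_eq_zero fun r _ => pderiv_eq_zero_of_isHomogeneous_zero (hu r) r
    simp [gradientProjection, div_eq_zero]
  · exact (hG k _ (isHomogeneous_polyDivergence hu)).pderiv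

end GradientProjection

section Dimension

variable {σ K : Type*} [Fintype σ] [Field K]

theorem navierSubmodule_eq_comap {G : MvPolynomial σ K →ₗ[K] MvPolynomial σ K} {b : K}
    (hG : Function.RightInverse G (polyLaplacian σ K))
    (hG_hom : ∀ m p, p.IsHomogeneous m → (G p).IsHomogeneous (m + 2)) (hb : 1 + b ≠ 0) (k : ℕ) :
    navierSubmodule σ b k = (Submodule.pi Set.univ fun _ => harmonicSubmodule σ K k).comap
      (1 + b • gradientProjection G) := by
  have harmonic_pi : (Submodule.pi Set.univ fun _ : σ => harmonicSubmodule σ K k) =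
      (Submodule.pi Set.univ fun _ => homogeneousSubmodule σ K k) ⊓
        LinearMap.ker ((polyLaplacian σ K).compLeft σ) := by
    ext u
    simp [harmonicSubmodule, Submodule.mem_pi, funext_iff, forall_and]
  rw [harmonic_pi, Submodule.comap_inf, ← LinearMap.ker_comp, ← navier_eq_polyLaplacian_comp hG,
    comap_one_add_smul_of_isIdempotentElem (isIdempotentElem_gradientProjection hG) hb
      (homogeneous_mem_invtSubmodule_gradientProjection hG_hom k)]
  rfl

theorem rank_pi_univ_const {V : Type*} [AddCommGroup V] [Module K V] (W : Submodule K V) :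
    Module.rank K (Submodule.pi Set.univ fun _ : σ => W) =
      Fintype.card σ * Cardinal.lift (Module.rank K W) := by
  have range_eq : LinearMap.range (W.subtype.compLeft σ) = Submodule.pi Set.univ fun _ => W := by
    rw [LinearMap.range_compLeft, W.range_subtype]
  rw [← range_eq, rank_range_of_injective _ W.injective_subtype.comp_left, rank_fun_eq_lift_mul]

theorem dim_Hhat_eq_general [CharZero K] {b : K} (hb : 1 + b ≠ 0) (k : ℕ) :
    Module.rank K (navierSubmodule σ b k) =
      Fintype.card σ * Module.rank K (harmonicSubmodule σ K k) := by
  cases isEmpty_or_nonempty σ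
  · simp
  obtain ⟨G, hG, hG_hom⟩ := exists_polyLaplacian_rightInverse σ K
  obtain ⟨T, hT⟩ :=
    isUnit_one_add_smul_of_isIdempotentElem (isIdempotentElem_gradientProjection hG) hb
  rw [navierSubmodule_eq_comap hG hG_hom hb, ← hT]
  let e := (LinearMap.GeneralLinearGroup.toLinearEquiv T).ofSubmodule'
    (Submodule.pi Set.univ fun _ => harmonicSubmodule σ K k)
  refine e.rank_eq.trans ?_
  rw [rank_pi_univ_const, Cardinal.lift_id']

end Dimension

theorem harmSub_eq_harmonicSubmodule (n k : ℕ) : harmSub n k = harmonicSubmodule (Fin n) ℝ k :=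
  rfl

theorem HhatSub_eq_navierSubmodule (n : ℕ) (b : ℝ) (k : ℕ) :
    HhatSub n b k = navierSubmodule (Fin n) b k :=
  rfl

/-- `dim Ĥₖ = n · dim Hₖ`. -/
theorem dim_Hhat_eq (n : ℕ) (hn : 3 ≤ n) (b : ℝ) (hb : b ≠ 0) (hb1 : 0 < b + 1)
    (k : ℕ) :
    Module.rank ℝ ↥(HhatSub n b k) = n * Module.rank ℝ ↥(harmSub n k) := by
  rw [HhatSub_eq_navierSubmodule, harmSub_eq_harmonicSubmodule,
    dim_Hhat_eq_general (add_comm b 1 ▸ hb1.ne'), Fintype.card_fin]
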